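/- Let n entities of radius ρ ≥ 0 move in ℝ^d along 1-Lipschitz trajectories ζ_1, …, ζ_n, and let 1 ≤ x ≤ n−1 be an integer. Then for every index i the function t ↦ σ_i(x,t) is 2-Lipschitz: |σ_i(x,t) − σ_i(x,t')| ≤ 2·|t − t'| for all times t, t'. -/

import Mathlib

open Metric Set

/-- The `x`-separation of entity `i` in the configuration `z` of entities of radius `ρ`:
the `x`-th smallest value of `dist (z i) (z j) - 2ρ` over `j ≠ i`. -/
noncomputable def xSep {d n : ℕ} (ρ : ℝ) (z : Fin n → EuclideanSpace ℝ (Fin d))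
    (x : ℕ) (i : Fin n) : ℝ :=
  sInf {r : ℝ | x ≤ {j : Fin n | j ≠ i ∧ dist (z i) (z j) - 2 * ρ ≤ r}.ncard}

/-!
The `k`-th smallest value of a finite family is the least threshold `r` such that at least `k` of
the values are at most `r`. If `f ≤ g + c` pointwise, every threshold for `g` becomes one for `f`
after adding `c`, so order statistics inherit any Lipschitz constant common to the family. The
distance between two `K`-Lipschitz trajectories is `2K`-Lipschitz.
-/

section OrderStatistic

variable {ι T : Type*} {s : Set ι} {f g : ι → ℝ} {k : ℕ}

/-- The thresholds `r` such that at least `k` indices in `s` have value at most `r` under `f`; their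
infimum is the `k`-th smallest value. The count is `Set.ncard`, which is `0` on infinite sets. -/
def orderThresholds (s : Set ι) (f : ι → ℝ) (k : ℕ) : Set ℝ :=
  {r | k ≤ {j | j ∈ s ∧ f j ≤ r}.ncard}

/-- The `k`-th order statistic (`k`-th smallest value, counted from `1` and with multiplicity) of
the family `f` over the indices in `s`, as the least threshold admitting `k` values. For finite
`s` it is the junk value `0` unless `1 ≤ k ≤ s.ncard`. -/
noncomputable def orderStatistic (s : Set ι) (f : ι → ℝ) (k : ℕ) : ℝ :=
  sInf (orderThresholds s f k)

theorem orderThresholds_nonempty (hs : s.Finite) (hk : k ≤ s.ncard) :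
    (orderThresholds s f k).Nonempty := by
  obtain ⟨M, hM⟩ := (hs.image f).bddAbove
  have sublevel_eq : {j | j ∈ s ∧ f j ≤ M} = s :=
    sep_eq_self_iff_mem_true.mpr fun _ hj => hM (mem_image_of_mem f hj)
  exact ⟨M, by rwa [orderThresholds, mem_ofPred_eq, sublevel_eq]⟩

theorem bddBelow_orderThresholds (hs : s.Finite) (hk : 1 ≤ k) :
    BddBelow (orderThresholds s f k) := by
  obtain ⟨m, hm⟩ := (hs.image f).bddBelow
  refine ⟨m, fun r hr => ?_⟩
  obtain ⟨j, hj, hjr⟩ := nonempty_of_ncard_ne_zero (Nat.one_le_iff_ne_zero.mp (hk.trans hr))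
  exact (hm (mem_image_of_mem f hj)).trans hjr

theorem add_mem_orderThresholds {c r : ℝ} (hs : s.Finite) (hfg : ∀ j ∈ s, f j ≤ g j + c)
    (hr : r ∈ orderThresholds s g k) : r + c ∈ orderThresholds s f k := by
  have sublevel_subset : {j | j ∈ s ∧ g j ≤ r} ⊆ {j | j ∈ s ∧ f j ≤ r + c} :=
    fun j ⟨hj, hjr⟩ => ⟨hj, (hfg j hj).trans (by gcongr)⟩
  exact hr.trans (ncard_le_ncard sublevel_subset (hs.sep _))

theorem orderStatistic_le_add {c : ℝ} (hk : 1 ≤ k) (hks : k ≤ s.ncard)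
    (hfg : ∀ j ∈ s, f j ≤ g j + c) : orderStatistic s f k ≤ orderStatistic s g k + c := by
  have hs : s.Finite := finite_of_ncard_pos (hk.trans hks)
  rw [← sub_le_iff_le_add]
  refine le_csInf (orderThresholds_nonempty hs hks) fun r hr => ?_
  rw [sub_le_iff_le_add]
  exact csInf_le (bddBelow_orderThresholds hs hk) (add_mem_orderThresholds hs hfg hr)

theorem lipschitzWith_orderStatistic [PseudoMetricSpace T] {K : NNReal} {F : ι → T → ℝ}
    (hk : 1 ≤ k) (hks : k ≤ s.ncard) (hF : ∀ j ∈ s, LipschitzWith K (F j)) :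
    LipschitzWith K fun t => orderStatistic s (fun j => F j t) k :=
  LipschitzWith.of_le_add_mul K fun t t' =>
    orderStatistic_le_add hk hks fun j hj => (hF j hj).le_add_mul t t'

end OrderStatistic

theorem xSep_eq_orderStatistic {d n : ℕ} (ρ : ℝ) (z : Fin n → EuclideanSpace ℝ (Fin d))
    (x : ℕ) (i : Fin n) :
    xSep ρ z x i = orderStatistic {i}ᶜ (fun j => dist (z i) (z j) - 2 * ρ) x :=
  rfl

theorem stmt13_general {ι T X : Type*} [PseudoMetricSpace T] [PseudoMetricSpace X]
    {K : NNReal} (ρ : ℝ) {ζ : ι → T → X} (hζ : ∀ i, LipschitzWith K (ζ i))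
    {x : ℕ} (hx : 1 ≤ x) {i : ι} (hxi : x ≤ ({i}ᶜ : Set ι).ncard) :
    LipschitzWith (2 * K) fun t =>
      orderStatistic {i}ᶜ (fun j => dist (ζ i t) (ζ j t) - 2 * ρ) x := by
  refine lipschitzWith_orderStatistic hx hxi fun j _ => ?_
  have hdist : LipschitzWith (2 * K) fun t => dist (ζ i t) (ζ j t) := by
    simpa only [max_self, Function.comp_def, Function.uncurry_apply_pair] using
      LipschitzWith.dist.comp ((hζ i).prodMk (hζ j))
  simpa only [add_zero] using hdist.sub (LipschitzWith.const (2 * ρ))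

theorem stmt13 (d n : ℕ) (ρ : ℝ) (hρ : 0 ≤ ρ)
    (ζ : Fin n → ℝ → EuclideanSpace ℝ (Fin d))
    (hlip : ∀ i : Fin n, LipschitzWith 1 (ζ i))
    (x : ℕ) (hx1 : 1 ≤ x) (hxn : x ≤ n - 1) :
    ∀ (i : Fin n) (t t' : ℝ),
      |xSep ρ (fun j => ζ j t) x i - xSep ρ (fun j => ζ j t') x i| ≤ 2 * |t - t'| := by
  intro i t t'
  have hxi : x ≤ ({i}ᶜ : Set (Fin n)).ncard := by
    rwa [ncard_compl, ncard_singleton, Nat.card_fin]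
  simpa [xSep_eq_orderStatistic, Real.dist_eq] using
    (stmt13_general ρ hlip hx1 hxi).dist_le_mul t t'
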